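/- arXiv:1706.03840 — 4 statements merged into one kernel-verified Lean document; each statement's English description precedes it below -/
import Mathlib

section
/- Let f_0 : (1,∞) → [0,∞] be measurable, let t ∈ ℝ and u ∈ ℝ^{n-1-d}, and set η = cosh t + (|u|²/2)e^t. Then, as an identity in [0,∞], ∫_{ℝ^d} f_0( cosh t + ((|u|² + |w|²)/2) e^t ) dw = 2^{d/2 - 1} σ_{d-1} Γ(d/2) e^{-t d/2} (I_-^{d/2} f_0)(η). In particular, the d-horospherical transform of the K-invariant function f(x) = f_0(x_{n+1}) at the horosphere k a_t n_u ξ_0 equals 2^{d/2-1} σ_{d-1} Γ(d/2) e^{-td/2} (I_-^{d/2} f_0)(η). -/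
/-!
The horosphere point `k a_t n_v x₀` has last coordinate `cosh t + |v|² eᵗ / 2` (`last_coord`), and
for `v = (u, w)` the squared norm splits as `|u|² + |w|²` (`nsq_emb`). The transform of a zonal
function is therefore the integral over `w ∈ ℝ^d` of the radial function `f₀(η + |w|² eᵗ / 2)`.

Polar coordinates on `ℝ^d` (`lintegral_radial`) reduce it to `σ_{d-1} ∫₀^∞ r^{d-1} f₀(η + r² eᵗ / 2) dr`,
and the substitution `s = η + r² eᵗ / 2` (`lintegral_abel_subst`) turns the weight `r^{d-1} dr` into
`2^{d/2-1} e^{-td/2} (s - η)^{d/2-1} ds`, which is the kernel of the Riemann–Liouville integral of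
order `d/2`. All steps are identities in `[0,∞]`, so no integrability is needed.
-/

open MeasureTheory Real Set
open scoped ENNReal

noncomputable section

/-- The pseudo-Euclidean bilinear form `[x,y]` on `ℝ^{n+1}`. -/
def Lform {n : ℕ} (x y : Fin (n + 1) → ℝ) : ℝ :=
  x (Fin.last n) * y (Fin.last n) - ∑ i : Fin n, x i.castSucc * y i.castSucc

/-- The hyperboloid model `H^n`. -/
def Hyp (n : ℕ) : Set (Fin (n + 1) → ℝ) :=
  {x | Lform x x = 1 ∧ 0 < x (Fin.last n)}

/-- The origin `x₀ = e_{n+1}` of `H^n`. -/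
def origin (n : ℕ) : Fin (n + 1) → ℝ := fun i => if i = Fin.last n then 1 else 0

/-- Squared Euclidean norm of a vector. -/
def nsq {m : ℕ} (v : Fin m → ℝ) : ℝ := ∑ i, v i ^ 2

/-- The matrix `n_v`, `v ∈ ℝ^{n-1}`. -/
def nMat (n : ℕ) (v : Fin (n - 1) → ℝ) : Matrix (Fin (n + 1)) (Fin (n + 1)) ℝ :=
  Matrix.of fun i j =>
    if hi : (i : ℕ) < n - 1 then
      if hj : (j : ℕ) < n - 1 then (if (i : ℕ) = (j : ℕ) then 1 else 0)
      else if (j : ℕ) = n - 1 then -v ⟨i, hi⟩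
      else v ⟨i, hi⟩
    else if (i : ℕ) = n - 1 then
      if hj : (j : ℕ) < n - 1 then v ⟨j, hj⟩
      else if (j : ℕ) = n - 1 then 1 - nsq v / 2
      else nsq v / 2
    else
      if hj : (j : ℕ) < n - 1 then v ⟨j, hj⟩
      else if (j : ℕ) = n - 1 then -(nsq v / 2)
      else 1 + nsq v / 2

/-- The hyperbolic rotation `a_t` in the `(x_n, x_{n+1})` plane. -/
def aMat (n : ℕ) (t : ℝ) : Matrix (Fin (n + 1)) (Fin (n + 1)) ℝ :=
  Matrix.of fun i j =>
    if (i : ℕ) < n - 1 then (if (i : ℕ) = (j : ℕ) then 1 else 0)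
    else if (i : ℕ) = n - 1 then
      (if (j : ℕ) = n - 1 then Real.cosh t else if (j : ℕ) = n then Real.sinh t else 0)
    else
      (if (j : ℕ) = n - 1 then Real.sinh t else if (j : ℕ) = n then Real.cosh t else 0)

/-- Identification of `u ∈ ℝ^{n-1-d}` with `(u,0,…,0) ∈ ℝ^{n-1}`. -/
def embU (n d : ℕ) (u : Fin (n - 1 - d) → ℝ) : Fin (n - 1) → ℝ := fun i =>
  if h : (i : ℕ) < n - 1 - d then u ⟨i, h⟩ else 0

/-- Identification of `w ∈ ℝ^d` with `(0,…,0,w) ∈ ℝ^{n-1}`. -/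
def embW (n d : ℕ) (w : Fin d → ℝ) : Fin (n - 1) → ℝ := fun i =>
  if h : (i : ℕ) - (n - 1 - d) < d then
    (if n - 1 - d ≤ (i : ℕ) then w ⟨(i : ℕ) - (n - 1 - d), h⟩ else 0)
  else 0

/-- The embedding `k ↦ diag(k,1)` of `n×n` matrices into `(n+1)×(n+1)` matrices. -/
def embSO (n : ℕ) (k : Fin n → Fin n → ℝ) : Matrix (Fin (n + 1)) (Fin (n + 1)) ℝ :=
  Matrix.of fun i j =>
    if hi : (i : ℕ) < n then (if hj : (j : ℕ) < n then k ⟨i, hi⟩ ⟨j, hj⟩ else 0)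
    else (if (j : ℕ) < n then 0 else 1)

/-- The special orthogonal group `SO(n)` (as a set of `n×n` matrices). -/
def SOset (n : ℕ) : Set (Fin n → Fin n → ℝ) :=
  {k | Matrix.of k * Matrix.transpose (Matrix.of k) = 1 ∧ (Matrix.of k).det = 1}

/-- The group `G = SO₀(n,1)`: matrices preserving the form `[·,·]`, with `det = 1`
and positive lower-right entry. -/
def Gset (n : ℕ) : Set (Matrix (Fin (n + 1)) (Fin (n + 1)) ℝ) :=
  {g | (∀ x y, Lform (g.mulVec x) (g.mulVec y) = Lform x y) ∧ g.det = 1 ∧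
    0 < g (Fin.last n) (Fin.last n)}

/-- `μ` is the normalized Haar probability measure of `SO(n)`. -/
structure IsHaarSO (n : ℕ) (μ : Measure (Fin n → Fin n → ℝ)) : Prop where
  prob : IsProbabilityMeasure μ
  supported : μ (SOset n)ᶜ = 0
  invariant : ∀ k₀ ∈ SOset n,
    Measure.map (fun k => Matrix.of.symm (Matrix.of k₀ * Matrix.of k)) μ = μ

/-- Surface area `σ_m = 2 π^{(m+1)/2} / Γ((m+1)/2)` of the unit sphere `S^m`. -/
def sphereArea (m : ℕ) : ℝ :=
  2 * Real.pi ^ (((m : ℝ) + 1) / 2) / Real.Gamma (((m : ℝ) + 1) / 2)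

/-- The point `θ sinh r + e_{n+1} cosh r` of `H^n`. -/
def hypPoint (n : ℕ) (θ : EuclideanSpace ℝ (Fin n)) (r : ℝ) : Fin (n + 1) → ℝ := fun i =>
  if h : (i : ℕ) < n then Real.sinh r * θ ⟨i, h⟩ else Real.cosh r

/-- The invariant measure on `H^n`:
`∫ f d(hypMeasure n) = ∫_{S^{n-1}} ∫_0^∞ f(θ sinh r + e_{n+1} cosh r) sinh^{n-1} r dr dθ`. -/
def hypMeasure (n : ℕ) : Measure (Fin (n + 1) → ℝ) :=
  Measure.map (fun p : Metric.sphere (0 : EuclideanSpace ℝ (Fin n)) 1 × ℝ => hypPoint n p.1 p.2)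
    ((volume.toSphere).prod
      ((volume.restrict (Set.Ioi (0 : ℝ))).withDensity fun r => ENNReal.ofReal (Real.sinh r ^ (n - 1))))

/-- The Riemann–Liouville fractional integral `I₋^α` (for `[0,∞]`-valued functions). -/
def RLinf (α : ℝ) (f : ℝ → ℝ≥0∞) (r : ℝ) : ℝ≥0∞ :=
  ENNReal.ofReal ((Real.Gamma α)⁻¹) * ∫⁻ s in Set.Ioi r, f s * ENNReal.ofReal ((s - r) ^ (α - 1))

/-- Inverse hyperbolic cosine. -/
def arcoshR (x : ℝ) : ℝ := Real.log (x + Real.sqrt (x ^ 2 - 1))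

/-- The embedding `m ↦ diag(m, I₂)` of `(n-1)×(n-1)` matrices. -/
def embM (n : ℕ) (m : Fin (n - 1) → Fin (n - 1) → ℝ) : Matrix (Fin (n + 1)) (Fin (n + 1)) ℝ :=
  Matrix.of fun i j =>
    if hi : (i : ℕ) < n - 1 then (if hj : (j : ℕ) < n - 1 then m ⟨i, hi⟩ ⟨j, hj⟩ else 0)
    else (if (j : ℕ) < n - 1 then 0 else if (i : ℕ) = (j : ℕ) then 1 else 0)

/-- The embedding `(α, β) ↦ diag(α, β, I₂)`. -/
def embMd (n d : ℕ) (a : Fin (n - 1 - d) → Fin (n - 1 - d) → ℝ) (b : Fin d → Fin d → ℝ) :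
    Matrix (Fin (n + 1)) (Fin (n + 1)) ℝ :=
  Matrix.of fun i j =>
    if hi : (i : ℕ) < n - 1 - d then (if hj : (j : ℕ) < n - 1 - d then a ⟨i, hi⟩ ⟨j, hj⟩ else 0)
    else if (i : ℕ) < n - 1 then
      (if (j : ℕ) < n - 1 - d then 0
       else if (j : ℕ) < n - 1 then
         (if hi2 : (i : ℕ) - (n - 1 - d) < d then
            (if hj2 : (j : ℕ) - (n - 1 - d) < d then
              b ⟨(i : ℕ) - (n - 1 - d), hi2⟩ ⟨(j : ℕ) - (n - 1 - d), hj2⟩ else 0)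
          else 0)
       else 0)
    else (if (j : ℕ) < n - 1 then 0 else if (i : ℕ) = (j : ℕ) then 1 else 0)

/-- Integration in polar coordinates for a `[0,∞]`-valued radial function on `ℝ^d`: the constant
`d · vol(B₁)` produced by the disintegration of Lebesgue measure is the surface area of `S^{d-1}`. -/
lemma lintegral_radial (d : ℕ) (hd : 1 ≤ d) (g : ℝ → ℝ≥0∞) (hg : Measurable g) :
    ∫⁻ w : Fin d → ℝ, g (√(nsq w)) =
      ENNReal.ofReal (sphereArea (d - 1)) *
        ∫⁻ r in Ioi (0 : ℝ), ENNReal.ofReal (r ^ (d - 1)) * g r := by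
  have : Nonempty (Fin d) := ⟨⟨0, hd⟩⟩
  let E := EuclideanSpace ℝ (Fin d)
  have h1 : ∫⁻ w : Fin d → ℝ, g (√(nsq w)) = ∫⁻ x : E, g ‖x‖ := by
    rw [← (PiLp.volume_preserving_ofLp (Fin d)).lintegral_comp_emb
      (MeasurableEquiv.toLp 2 (Fin d → ℝ)).symm.measurableEmbedding]
    refine lintegral_congr fun x => ?_
    rw [EuclideanSpace.norm_eq]
    simp [nsq]
  have h2 : ∫⁻ x : E, g ‖x‖ = ∫⁻ x : ({(0)}ᶜ : Set E), g ‖x.1‖ ∂(volume.comap Subtype.val) := by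
    rw [lintegral_subtype_comap (measurableSet_singleton _).compl fun x ↦ g (‖x‖),
      restrict_compl_singleton]
  have h3 := (volume : Measure E).measurePreserving_homeomorphUnitSphereProd.lintegral_comp_emb
    (Homeomorph.measurableEmbedding _) (g ∘ Subtype.val ∘ Prod.snd)
  simp only [Function.comp_def, homeomorphUnitSphereProd_apply_snd_coe] at h3
  have hm : Measurable fun x : Ioi (0 : ℝ) => g x.1 := hg.comp measurable_subtype_coe
  have hmp : Measurable fun x : Ioi (0 : ℝ) => ENNReal.ofReal (x.1 ^ (d - 1)) :=
    (measurable_subtype_coe.pow_const _).ennreal_ofReal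
  have hdR : (0 : ℝ) < d := by exact_mod_cast hd
  have hconst : (d : ℝ≥0∞) * volume (Metric.ball (0 : E) 1) =
      ENNReal.ofReal (sphereArea (d - 1)) := by
    rw [EuclideanSpace.volume_ball, ← ENNReal.ofReal_natCast]
    simp only [ENNReal.ofReal_one, one_pow, one_mul, Fintype.card_fin]
    rw [← ENNReal.ofReal_mul hdR.le, sphereArea, Nat.cast_sub hd, Nat.cast_one, sub_add_cancel,
      Real.Gamma_add_one (by positivity), Real.sqrt_eq_rpow, ← Real.rpow_natCast,
      ← Real.rpow_mul Real.pi_pos.le]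
    have hG : 0 < Real.Gamma ((d : ℝ) / 2) := Real.Gamma_pos_of_pos (by positivity)
    congr 1
    rw [show (1 / 2 : ℝ) * d = d / 2 by ring]
    field_simp
  rw [h1, h2, h3, lintegral_prod _ (by exact (hm.comp measurable_snd).aemeasurable)]
  have hfr : Module.finrank ℝ E = d := finrank_euclideanSpace_fin
  simp only [lintegral_const, Measure.toSphere_apply_univ, hfr, Measure.volumeIoiPow]
  rw [hconst, lintegral_withDensity_eq_lintegral_mul _ hmp hm, mul_comm]
  congr 1
  exact lintegral_subtype_comap measurableSet_Ioi
    fun r : ℝ => ENNReal.ofReal (r ^ (d - 1)) * g r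

/-- The substitution `s = η + r² / 2 · eᵗ`, which turns a radial integral into an Abel-type one. -/
lemma lintegral_abel_subst (d : ℕ) (hd : 1 ≤ d) (f : ℝ → ℝ≥0∞) (t η : ℝ) :
    ∫⁻ r in Ioi (0 : ℝ), ENNReal.ofReal (r ^ (d - 1)) * f (η + r ^ 2 / 2 * Real.exp t) =
      ENNReal.ofReal ((2 : ℝ) ^ ((d : ℝ) / 2 - 1) * Real.exp (-(t * d / 2))) *
        ∫⁻ s in Ioi η, f s * ENNReal.ofReal ((s - η) ^ ((d : ℝ) / 2 - 1)) := by
  have he : 0 < Real.exp t := Real.exp_pos t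
  have himg : (fun r : ℝ => η + r ^ 2 / 2 * Real.exp t) '' Ioi 0 = Ioi η := by
    ext s
    simp only [mem_image, mem_Ioi]
    constructor
    · rintro ⟨r, hr, rfl⟩
      have : 0 < r ^ 2 / 2 * Real.exp t := by positivity
      linarith
    · intro hs
      have hs' : 0 < 2 * (s - η) / Real.exp t := div_pos (by linarith) he
      refine ⟨√(2 * (s - η) / Real.exp t), Real.sqrt_pos.2 hs', ?_⟩
      rw [Real.sq_sqrt hs'.le]
      field_simp
      ring
  have hinj : InjOn (fun r : ℝ => η + r ^ 2 / 2 * Real.exp t) (Ioi 0) := by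
    intro a ha b hb hab
    have h : a ^ 2 / 2 * Real.exp t = b ^ 2 / 2 * Real.exp t := add_left_cancel hab
    have h' : a ^ 2 = b ^ 2 := by
      have := mul_right_cancel₀ he.ne' h
      linarith
    exact (pow_left_inj₀ (le_of_lt ha) (le_of_lt hb) two_ne_zero).1 h'
  have hder : ∀ x ∈ Ioi (0 : ℝ), HasDerivWithinAt (fun r : ℝ => η + r ^ 2 / 2 * Real.exp t)
      (x * Real.exp t) (Ioi 0) x := by
    intro x _
    have := ((((hasDerivAt_id x).pow 2).div_const 2).mul_const (Real.exp t)).const_add η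
    convert! this.hasDerivWithinAt using 1
    simp
  have key := lintegral_image_eq_lintegral_abs_deriv_mul measurableSet_Ioi hder hinj
    (fun s => f s * ENNReal.ofReal ((s - η) ^ ((d : ℝ) / 2 - 1)))
  rw [himg] at key
  rw [key, ← lintegral_const_mul' _ _ ENNReal.ofReal_ne_top]
  refine setLIntegral_congr_fun measurableSet_Ioi fun r hr => ?_
  have hr : 0 < r := hr
  -- The powers of `2` and of `eᵗ` cancel: `(r²eᵗ/2)^{d/2-1} · r eᵗ = 2^{1-d/2} e^{td/2} r^{d-1}`.
  have hpow : r ^ (d - 1) = (2 : ℝ) ^ ((d : ℝ) / 2 - 1) * Real.exp (-(t * d / 2)) *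
      (|r * Real.exp t| * (η + r ^ 2 / 2 * Real.exp t - η) ^ ((d : ℝ) / 2 - 1)) := by
    rw [abs_of_pos (by positivity), add_sub_cancel_left,
      Real.mul_rpow (by positivity) he.le, Real.div_rpow (by positivity) zero_le_two,
      ← Real.exp_mul, ← Real.rpow_natCast r 2, ← Real.rpow_mul hr.le, ← Real.rpow_natCast,
      Nat.cast_sub hd]
    have h1 : r ^ ((d : ℝ) - (1 : ℕ)) = r * r ^ (((2 : ℕ) : ℝ) * ((d : ℝ) / 2 - 1)) := by
      nth_rw 2 [← Real.rpow_one r]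
      rw [← Real.rpow_add hr]
      congr 1
      push_cast
      ring
    have h2 : Real.exp (-(t * d / 2)) * (Real.exp t * Real.exp (t * ((d : ℝ) / 2 - 1))) = 1 := by
      rw [← Real.exp_add, ← Real.exp_add, Real.exp_eq_one_iff]
      ring
    have h3 : (0 : ℝ) < 2 ^ ((d : ℝ) / 2 - 1) := by positivity
    rw [h1]
    generalize r ^ (((2 : ℕ) : ℝ) * ((d : ℝ) / 2 - 1)) = R at *
    generalize (2 : ℝ) ^ ((d : ℝ) / 2 - 1) = T at *
    generalize Real.exp (t * ((d : ℝ) / 2 - 1)) = A at *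
    generalize Real.exp (-(t * d / 2)) = B at *
    field_simp
    linear_combination -R * h2
  rw [hpow, ENNReal.ofReal_mul (by positivity), ENNReal.ofReal_mul (abs_nonneg _)]
  ring

/-- In `n_v x₀ = (v, |v|²/2, 1 + |v|²/2)` the rotation `a_t` mixes only the last two coordinates,
and `diag(k, 1)` leaves the last one alone for every `k`; hence the last coordinate of `k a_t n_v x₀` is
`cosh t + |v|² eᵗ / 2`. -/
lemma last_coord (n : ℕ) (hn : 2 ≤ n) (k : Fin n → Fin n → ℝ) (t : ℝ) (v : Fin (n - 1) → ℝ) :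
    ((embSO n k * aMat n t * nMat n v).mulVec (origin n)) (Fin.last n) =
      Real.cosh t + nsq v / 2 * Real.exp t := by
  obtain ⟨m, rfl⟩ : ∃ m, n = m + 1 := ⟨n - 1, by omega⟩
  have h1 : (nMat (m + 1) v).mulVec (origin (m + 1)) =
      fun i => nMat (m + 1) v i (Fin.last (m + 1)) := by
    ext i
    simp [Matrix.mulVec, dotProduct, origin]
  have h2 : ∀ x : Fin (m + 1 + 1) → ℝ,
      (embSO (m + 1) k).mulVec x (Fin.last (m + 1)) = x (Fin.last (m + 1)) := by
    intro x
    rw [Matrix.mulVec, dotProduct, Fin.sum_univ_castSucc]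
    simp [embSO]
    exact Finset.sum_eq_zero fun i _ => if_pos (by omega)
  have h3 : ∀ x : Fin (m + 1 + 1) → ℝ, (aMat (m + 1) t).mulVec x (Fin.last (m + 1)) =
      Real.sinh t * x (Fin.last m).castSucc + Real.cosh t * x (Fin.last (m + 1)) := by
    intro x
    rw [Matrix.mulVec, dotProduct, Fin.sum_univ_castSucc, Fin.sum_univ_castSucc]
    have : ∀ i : Fin m, ¬ (i : ℕ) = m ∧ ¬ (i : ℕ) = m + 1 := fun i => by omega
    simp [aMat, this]
  rw [← Matrix.mulVec_mulVec, ← Matrix.mulVec_mulVec, h2, h3, h1]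
  simp [nMat]
  rw [← Real.cosh_add_sinh]
  ring

/-- `(u, 0)` and `(0, w)` are orthogonal in `ℝ^{n-1}`. -/
lemma nsq_emb (n d : ℕ) (hdn : d ≤ n - 1) (u : Fin (n - 1 - d) → ℝ) (w : Fin d → ℝ) :
    nsq (embU n d u + embW n d w) = nsq u + nsq w := by
  have hc : (n - 1 - d) + d = n - 1 := by omega
  unfold nsq
  rw [← Equiv.sum_comp (finCongr hc), Fin.sum_univ_add]
  congr 1
  · refine Finset.sum_congr rfl fun i _ => ?_
    have : ¬ (n - 1 - d ≤ (i : ℕ)) := by omega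
    simp [embU, embW, this]
  · refine Finset.sum_congr rfl fun i _ => ?_
    simp [embU, embW]

/-- Abel-type representation of the `d`-horospherical transform of a
zonal (`K`-invariant) function. -/
theorem horospherical_transform_zonal
    (n d : ℕ) (hn : 2 ≤ n) (hd1 : 1 ≤ d) (hdn : d ≤ n - 1)
    (f₀ : ℝ → ℝ≥0∞) (hf₀ : Measurable f₀) (t : ℝ) (u : Fin (n - 1 - d) → ℝ)
    (η : ℝ) (hη : η = Real.cosh t + nsq u / 2 * Real.exp t) :
    (∫⁻ w : Fin d → ℝ, f₀ (Real.cosh t + (nsq u + nsq w) / 2 * Real.exp t)) =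
      ENNReal.ofReal ((2 : ℝ) ^ ((d : ℝ) / 2 - 1) * sphereArea (d - 1) *
          Real.Gamma ((d : ℝ) / 2) * Real.exp (-(t * d / 2))) *
        RLinf ((d : ℝ) / 2) f₀ η ∧
    ∀ k ∈ SOset n,
      (∫⁻ w : Fin d → ℝ,
          f₀ (((embSO n k * aMat n t * nMat n (embU n d u + embW n d w)).mulVec
            (origin n)) (Fin.last n))) =
        ENNReal.ofReal ((2 : ℝ) ^ ((d : ℝ) / 2 - 1) * sphereArea (d - 1) *
            Real.Gamma ((d : ℝ) / 2) * Real.exp (-(t * d / 2))) *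
          RLinf ((d : ℝ) / 2) f₀ η := by
  have main : (∫⁻ w : Fin d → ℝ, f₀ (Real.cosh t + (nsq u + nsq w) / 2 * Real.exp t)) =
      ENNReal.ofReal ((2 : ℝ) ^ ((d : ℝ) / 2 - 1) * sphereArea (d - 1) *
          Real.Gamma ((d : ℝ) / 2) * Real.exp (-(t * d / 2))) *
        RLinf ((d : ℝ) / 2) f₀ η := by
    have hG : 0 < Real.Gamma ((d : ℝ) / 2) :=
      Real.Gamma_pos_of_pos (by have : (0 : ℝ) < d := by exact_mod_cast hd1
                                positivity)
    have hs : 0 ≤ sphereArea (d - 1) := by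
      have : 0 < Real.Gamma ((((d - 1 : ℕ) : ℝ) + 1) / 2) := Real.Gamma_pos_of_pos (by positivity)
      unfold sphereArea
      positivity
    have hrad : ∀ w : Fin d → ℝ, Real.cosh t + (nsq u + nsq w) / 2 * Real.exp t =
        η + √(nsq w) ^ 2 / 2 * Real.exp t := by
      intro w
      rw [Real.sq_sqrt (show 0 ≤ nsq w from Finset.sum_nonneg fun i _ => sq_nonneg (w i)), hη]
      ring
    simp only [hrad]
    rw [lintegral_radial d hd1 (fun r => f₀ (η + r ^ 2 / 2 * Real.exp t))
      (hf₀.comp (by fun_prop)), lintegral_abel_subst d hd1, RLinf, ← mul_assoc, ← mul_assoc,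
      ← ENNReal.ofReal_mul hs, ← ENNReal.ofReal_mul (by positivity)]
    congr 2
    field_simp
  refine ⟨main, fun k _ => ?_⟩
  simp only [last_coord n hn, nsq_emb n d hdn]
  exact main
end
end

section
/- Let μ > d/2 and let f : H^n → ℝ be continuous with |f(x)| ≤ C x_{n+1}^{-μ} for all x ∈ H^n and some constant C. Then for every (n+1)×(n+1) real matrix g with [gx, gy] = [x,y] for all x, y ∈ ℝ^{n+1} and g x_0 ∈ H^n, the integral ∫_{ℝ^d} |f(g n_w x_0)| dw is finite; that is, the d-horospherical transform \hat f(ξ) exists as an absolutely convergent integral for every d-horosphere ξ = g ξ_0. -/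
/-!
The points of a `d`-horosphere are `x = g y` with `y = n_w x₀`, and `y` lies on `H^n` with last
coordinate `1 + |w|² / 2`. Put `p = g x₀`. Invariance of the form gives `[x, p] = [y, x₀] = y_{n+1}`,
while Cauchy-Schwarz in the first `n` coordinates gives `0 < x_{n+1}` and
`[x, p] ≤ 2 x_{n+1} p_{n+1}` (`last_pos_and_Lform_le`). Hence `x ∈ H^n` and
`x_{n+1} ≥ (1 + |w|² / 2) / (2 p_{n+1})`, so that `|f x|` is at most a constant times
`(1 + ‖w‖) ^ (-2μ)` (with the sup norm of `w`), which is integrable over `ℝ^d` because `2μ > d`.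
-/

open MeasureTheory Real Set
open scoped ENNReal

noncomputable section

/-- A matrix applied to `x₀` gives its last column. -/
lemma mulVec_origin {n : ℕ} (A : Matrix (Fin (n + 1)) (Fin (n + 1)) ℝ) (i : Fin (n + 1)) :
    A.mulVec (origin n) i = A i (Fin.last n) := by
  simp [Matrix.mulVec, dotProduct, origin]

lemma Lform_origin {n : ℕ} (y : Fin (n + 1) → ℝ) : Lform y (origin n) = y (Fin.last n) := by
  simp [Lform, origin, Fin.castSucc_ne_last]

lemma nMat_mulVec_last {n : ℕ} (hn : 1 ≤ n) (v : Fin (n - 1) → ℝ) :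
    (nMat n v).mulVec (origin n) (Fin.last n) = 1 + nsq v / 2 := by
  rw [mulVec_origin]
  have h1 : ¬ n < n - 1 := by omega
  have h2 : ¬ n = n - 1 := by omega
  simp [nMat, h1, h2]

lemma Lform_nMat_mulVec {n : ℕ} (hn : 1 ≤ n) (v : Fin (n - 1) → ℝ) :
    Lform ((nMat n v).mulVec (origin n)) ((nMat n v).mulVec (origin n)) = 1 := by
  obtain ⟨m, rfl⟩ : ∃ m, n = m + 1 := ⟨n - 1, by omega⟩
  have hsum : ∑ i : Fin (m + 1), (nMat (m + 1) v).mulVec (origin (m + 1)) i.castSucc *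
      (nMat (m + 1) v).mulVec (origin (m + 1)) i.castSucc = nsq v + (nsq v / 2) ^ 2 := by
    rw [Fin.sum_univ_castSucc]
    simp only [mulVec_origin]
    congr 1
    · refine Finset.sum_congr rfl fun i _ => ?_
      simp [nMat, pow_two]
    · simp [nMat, pow_two]
  rw [Lform, hsum, nMat_mulVec_last hn]
  ring

/-- The sup norm of `w` is dominated by the Euclidean norm of its image in `ℝ^{n-1}`. -/
lemma sq_norm_le_nsq_embW {n d : ℕ} (hdn : d ≤ n - 1) (w : Fin d → ℝ) :
    ‖w‖ ^ 2 ≤ nsq (embW n d w) := by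
  have h0 : 0 ≤ nsq (embW n d w) := Finset.sum_nonneg fun i _ => sq_nonneg _
  have hle : ‖w‖ ≤ √(nsq (embW n d w)) := by
    refine (pi_norm_le_iff_of_nonneg (Real.sqrt_nonneg _)).2 fun i => ?_
    rw [Real.norm_eq_abs]
    refine Real.abs_le_sqrt ?_
    have hi : n - 1 - d + (i : ℕ) < n - 1 := by omega
    have hw : embW n d w ⟨n - 1 - d + i, hi⟩ = w i := by simp [embW]
    rw [← hw]
    exact Finset.single_le_sum (f := fun j => embW n d w j ^ 2) (fun j _ => sq_nonneg _)
      (Finset.mem_univ _)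
  calc ‖w‖ ^ 2 ≤ √(nsq (embW n d w)) ^ 2 := by gcongr
    _ = _ := Real.sq_sqrt h0

/-- If `x` lies on the two-sheeted hyperboloid and `[x, p] > 0` for some `p ∈ H^n`, then `x` lies
on the same sheet as `p`, and `[x, p]` is controlled by the last coordinates. -/
lemma last_pos_and_Lform_le {n : ℕ} {x p : Fin (n + 1) → ℝ} (hp : p ∈ Hyp n)
    (hx : Lform x x = 1) (hxp : 0 < Lform x p) :
    0 < x (Fin.last n) ∧ Lform x p ≤ 2 * x (Fin.last n) * p (Fin.last n) := by
  obtain ⟨hp1, hp0⟩ := hp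
  have hcs := Finset.sum_mul_sq_le_sq_mul_sq Finset.univ
    (fun i : Fin n => x i.castSucc) (fun i : Fin n => p i.castSucc)
  simp only [Lform] at hx hp1 hxp ⊢
  simp only [← pow_two] at hx hp1
  set X := x (Fin.last n)
  set P := p (Fin.last n)
  set S := ∑ i : Fin n, x i.castSucc * p i.castSucc
  set A := ∑ i : Fin n, x i.castSucc ^ 2
  set B := ∑ i : Fin n, p i.castSucc ^ 2
  have hA : 0 ≤ A := Finset.sum_nonneg fun i _ => sq_nonneg _
  have hB : 0 ≤ B := Finset.sum_nonneg fun i _ => sq_nonneg _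
  have hS : S ^ 2 ≤ (|X| * P) ^ 2 := by
    rw [mul_pow, sq_abs]
    refine hcs.trans ?_
    gcongr <;> linarith
  have hS' := abs_le.1 (abs_le_of_sq_le_sq hS (by positivity))
  have hX : 0 < X := by
    by_contra h
    rw [abs_of_nonpos (not_lt.1 h)] at hS'
    linarith [hS'.1]
  rw [abs_of_pos hX] at hS'
  exact ⟨hX, by linarith [hS'.1]⟩

/-- existence of the `d`-horospherical transform on `C_μ(H^n)`, `μ > d/2`. -/
theorem horospherical_transform_exists_C_mu
    (n d : ℕ) (hn : 2 ≤ n) (hd1 : 1 ≤ d) (hdn : d ≤ n - 1)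
    (μ C : ℝ) (hμ : (d : ℝ) / 2 < μ)
    (f : (Fin (n + 1) → ℝ) → ℝ) (hfc : ContinuousOn f (Hyp n))
    (hfb : ∀ x ∈ Hyp n, |f x| ≤ C * (x (Fin.last n)) ^ (-μ))
    (g : Matrix (Fin (n + 1)) (Fin (n + 1)) ℝ)
    (hg : ∀ x y, Lform (g.mulVec x) (g.mulVec y) = Lform x y)
    (hgo : g.mulVec (origin n) ∈ Hyp n) :
    (∫⁻ w : Fin d → ℝ,
        ENNReal.ofReal |f ((g * nMat n (embW n d w)).mulVec (origin n))|) < ⊤ := by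
  set p := g.mulVec (origin n) with hp
  have hP : 0 < p (Fin.last n) := hgo.2
  set P := p (Fin.last n)
  have hd2 : (Module.finrank ℝ (Fin d → ℝ) : ℝ) < 2 * μ := by
    simp only [Module.finrank_fin_fun]
    linarith
  have hμ0 : 0 < μ := lt_of_le_of_lt (by positivity) hμ
  have hint : Integrable (fun w : Fin d → ℝ =>
      |C| * (8 * P) ^ μ * (1 + ‖w‖) ^ (-(2 * μ))) volume :=
    (integrable_one_add_norm hd2).const_mul _
  refine lt_of_le_of_lt (lintegral_mono fun w => ENNReal.ofReal_le_ofReal ?_) hint.lintegral_lt_top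
  set y := (nMat n (embW n d w)).mulVec (origin n) with hy
  rw [← Matrix.mulVec_mulVec, ← hy]
  have hylast : y (Fin.last n) = 1 + nsq (embW n d w) / 2 := nMat_mulVec_last (by omega) _
  have hxx : Lform (g.mulVec y) (g.mulVec y) = 1 := by
    rw [hg]
    exact Lform_nMat_mulVec (by omega) _
  have hxp : Lform (g.mulVec y) p = y (Fin.last n) := by rw [hp, hg, Lform_origin]
  have hnsq := sq_norm_le_nsq_embW hdn w
  obtain ⟨hX, hXP⟩ := last_pos_and_Lform_le hgo hxx (by
    rw [hxp, hylast]
    nlinarith [sq_nonneg ‖w‖])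
  have hfx := hfb _ ⟨hxx, hX⟩
  rw [hxp, hylast] at hXP
  set X := g.mulVec y (Fin.last n)
  -- `(1 + t)² ≤ 4 (1 + t² / 2)` turns the quadratic growth of `y_{n+1}` into a power of `1 + ‖w‖`.
  have hlow : (1 + ‖w‖) ^ 2 / (8 * P) ≤ X := by
    rw [div_le_iff₀ (by positivity)]
    have : (1 + ‖w‖) ^ 2 ≤ 4 * (2 * X * P) := by nlinarith [sq_nonneg (1 - ‖w‖)]
    linarith
  have hpow : ((1 + ‖w‖) ^ 2 / (8 * P)) ^ (-μ) = (8 * P) ^ μ * (1 + ‖w‖) ^ (-(2 * μ)) := by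
    rw [Real.div_rpow (by positivity) (by positivity), Real.rpow_neg (x := 8 * P) (by positivity),
      div_inv_eq_mul, ← Real.rpow_natCast, ← Real.rpow_mul (by positivity), mul_comm]
    congr 2
    push_cast
    ring
  calc |f (g.mulVec y)| ≤ C * X ^ (-μ) := hfx
    _ ≤ |C| * X ^ (-μ) := by
      gcongr
      exact le_abs_self C
    _ ≤ |C| * ((1 + ‖w‖) ^ 2 / (8 * P)) ^ (-μ) := by
      gcongr |C| * ?_
      exact Real.rpow_le_rpow_of_nonpos (by positivity) hlow (by linarith)
    _ = |C| * (8 * P) ^ μ * (1 + ‖w‖) ^ (-(2 * μ)) := by rw [hpow, mul_assoc]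
end
end

section
/- Let F : SO(n) × ℝ → ℝ be continuous with compact support in the second variable. Then lim_{α → 0⁺} c_α ∫_{SO(n)} ∫_ℝ F(k, t) e^{td/2} (cosh t - 1)^{α/2 - 1} |sinh t| dt dk = c^{-1} ∫_{SO(n)} F(k, 0) dk, where c_α = Γ((n-α-d)/2) / ( 2^{α/2 + d + 1} π^{d/2} Γ(α/2) Γ(n/2) ) and c = 2^d π^{d/2} Γ(n/2) / Γ((n-d)/2). (Applied to F(k,t) = φ(r_x k a_t ξ_0) for a continuous compactly supported function φ on the manifold of d-horospheres, this shows that the dual-type operators H^α φ converge as α → 0 to c^{-1} times the mean value operator φ̌.) -/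
/-! Put `β = α/2`. Since `1/Γ(β) = β/Γ(β+1)`, the constant `c_α` is `β/2` times a function of `α`
that is continuous at `0` with value `c⁻¹` there. So it suffices that
`(β/2) ∫∫ F(k,t) e^{td/2} (cosh t - 1)^{β-1} |sinh t| dt dk → ∫ F(k,0) dk` (`tendsto_double`).

On `[0, R]` the function `β (cosh t - 1)^{β-1} sinh t` is the derivative of `(cosh t - 1)^β`, so the
kernel `(β/2) (cosh t - 1)^{β-1} |sinh t|` has mass `(cosh R - 1)^β → 1` on `[-R, R]` (`wt_full`).
It tends to `0` uniformly away from `t = 0`, hence it is an approximate identity, and the inner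
integral converges to `F(k,0)` for each `k ∈ SO(n)` (`tendsto_inner`). The masses are eventually at
most `2` and `F` is bounded on the compact set `SO(n) × [-R, R]`, so dominated convergence over
`SO(n)` concludes. The behaviour of `F` off `SO(n)` does not matter, as this set is null. -/


open MeasureTheory Real Set
open scoped ENNReal

noncomputable section

lemma isClosed_SOset (n : ℕ) : IsClosed (SOset n) := by
  have h1 : Continuous fun k : Fin n → Fin n → ℝ =>
      (Matrix.of k * Matrix.transpose (Matrix.of k) : Matrix (Fin n) (Fin n) ℝ) := by
    have : Continuous fun k : Fin n → Fin n → ℝ => (Matrix.of k : Matrix (Fin n) (Fin n) ℝ) :=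
      continuous_id
    exact this.matrix_mul this.matrix_transpose
  have h2 : Continuous fun k : Fin n → Fin n → ℝ => (Matrix.of k : Matrix (Fin n) (Fin n) ℝ).det := by
    have : Continuous fun k : Fin n → Fin n → ℝ => (Matrix.of k : Matrix (Fin n) (Fin n) ℝ) :=
      continuous_id
    exact this.matrix_det
  exact (isClosed_eq h1 continuous_const).inter (isClosed_eq h2 continuous_const)

lemma isCompact_SOset (n : ℕ) : IsCompact (SOset n) := by
  refine Metric.isCompact_of_isClosed_isBounded (isClosed_SOset n) ?_
  refine (Metric.isBounded_closedBall (x := (0 : Fin n → Fin n → ℝ)) (r := 1)).subset ?_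
  rintro k ⟨hk, -⟩
  rw [mem_closedBall_zero_iff, pi_norm_le_iff_of_nonneg zero_le_one]
  intro i
  rw [pi_norm_le_iff_of_nonneg zero_le_one]
  intro j
  have h := congrFun (congrFun hk i) i
  rw [Matrix.mul_apply, Matrix.one_apply_eq] at h
  have h2 : k i j * k i j ≤ 1 := by
    rw [← h]
    exact Finset.single_le_sum (f := fun j => k i j * k i j)
      (fun j _ => mul_self_nonneg _) (Finset.mem_univ j)
  rw [Real.norm_eq_abs, abs_le]
  constructor <;> nlinarith

/-- The density `(cosh t - 1)^(β-1) |sinh t|` of the inner integral, with `β = α/2`. -/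
def wt (β t : ℝ) : ℝ := (Real.cosh t - 1) ^ (β - 1) * |Real.sinh t|

lemma cosh_sub_one_nonneg (t : ℝ) : 0 ≤ Real.cosh t - 1 := by
  linarith [Real.one_le_cosh t]

lemma wt_nonneg (β t : ℝ) : 0 ≤ wt β t :=
  mul_nonneg (Real.rpow_nonneg (cosh_sub_one_nonneg t) _) (abs_nonneg _)

lemma wt_neg (β t : ℝ) : wt β (-t) = wt β t := by
  simp [wt]

lemma measurable_wt (β : ℝ) : Measurable (wt β) := by
  unfold wt
  have := Real.measurable_cosh
  have := Real.measurable_sinh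
  fun_prop

/-- On `(0, R)` the weight `β wt β` is the derivative of `(cosh t - 1)^β`; as it is nonnegative,
this also gives its integrability at the singular endpoint `0`. -/
lemma wt_half {β R : ℝ} (hβ : 0 < β) (hR : 0 < R) :
    IntervalIntegrable (wt β) volume 0 R ∧
      ∫ t in (0 : ℝ)..R, wt β t = (Real.cosh R - 1) ^ β / β := by
  have hc : ContinuousOn (fun t : ℝ => (Real.cosh t - 1) ^ β / β) (Icc 0 R) := by
    have : Continuous fun t : ℝ => Real.cosh t - 1 := Real.continuous_cosh.sub continuous_const
    exact ((this.rpow_const fun _ => Or.inr hβ.le).div_const β).continuousOn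
  have hd : ∀ t ∈ Ioo 0 R, HasDerivAt (fun t : ℝ => (Real.cosh t - 1) ^ β / β) (wt β t) t := by
    intro t ht
    have hpos : 0 < Real.cosh t - 1 := by
      have := Real.one_lt_cosh.2 ht.1.ne'
      linarith
    have h := (((Real.hasDerivAt_cosh t).sub_const 1).rpow_const (p := β)
      (Or.inl hpos.ne')).div_const β
    refine h.congr_deriv ?_
    simp only [wt, abs_of_pos (Real.sinh_pos_iff.2 ht.1)]
    field_simp
  have hi : IntervalIntegrable (wt β) volume 0 R := by
    rw [intervalIntegrable_iff_integrableOn_Ioc_of_le hR.le]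
    exact intervalIntegral.integrableOn_deriv_of_nonneg hc hd fun t _ => wt_nonneg β t
  refine ⟨hi, ?_⟩
  rw [intervalIntegral.integral_eq_sub_of_hasDerivAt_of_le hR.le hc hd hi]
  simp [Real.zero_rpow hβ.ne']

lemma wt_full {β R : ℝ} (hβ : 0 < β) (hR : 0 < R) :
    IntegrableOn (wt β) (Icc (-R) R) ∧
      ∫ t in Icc (-R) R, wt β t = 2 * ((Real.cosh R - 1) ^ β / β) := by
  obtain ⟨hi, he⟩ := wt_half hβ hR
  have hi' : IntervalIntegrable (wt β) volume (-R) 0 := by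
    have h := (IntervalIntegrable.iff_comp_neg (f := wt β) (a := 0) (b := R)).1 hi
    simp only [wt_neg, neg_zero] at h
    exact h.symm
  have he' : ∫ t in (-R)..0, wt β t = (Real.cosh R - 1) ^ β / β := by
    rw [← he]
    have := intervalIntegral.integral_comp_neg (a := 0) (b := R) (wt β)
    simp only [wt_neg, neg_zero] at this
    exact this.symm
  have hle : -R ≤ R := by linarith
  constructor
  · rw [integrableOn_Icc_iff_integrableOn_Ioc, ← intervalIntegrable_iff_integrableOn_Ioc_of_le hle]
    exact hi'.trans hi
  · rw [integral_Icc_eq_integral_Ioc, ← intervalIntegral.integral_of_le hle,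
      ← intervalIntegral.integral_add_adjacent_intervals hi' hi, he, he']
    ring

lemma continuousAt_Gamma_of_pos {x : ℝ} (hx : 0 < x) : ContinuousAt Real.Gamma x := by
  refine (Real.differentiableAt_Gamma fun m => ?_).continuousAt
  have : (0 : ℝ) ≤ m := m.cast_nonneg
  linarith

lemma tendsto_mass {R : ℝ} (hR : 0 < R) :
    Filter.Tendsto (fun β : ℝ => (Real.cosh R - 1) ^ β) (nhdsWithin 0 (Ioi 0)) (nhds 1) := by
  have hpos : 0 < Real.cosh R - 1 := by
    have := Real.one_lt_cosh.2 hR.ne'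
    linarith
  have : ContinuousAt (fun β : ℝ => (Real.cosh R - 1) ^ β) 0 :=
    Real.continuousAt_const_rpow hpos.ne'
  simpa using this.tendsto.mono_left nhdsWithin_le_nhds

/-- The kernels `(β/2) wt β` on `[-R, R]` form an approximate identity at `0` as `β → 0⁺`. -/
lemma tendsto_inner {R : ℝ} (hR : 0 < R) {g : ℝ → ℝ} (hg : Continuous g) :
    Filter.Tendsto (fun β : ℝ => ∫ t in Icc (-R) R, (β / 2 * wt β t) * g t)
      (nhdsWithin 0 (Ioi 0)) (nhds (g 0)) := by
  have hmem : ∀ᶠ β : ℝ in nhdsWithin 0 (Ioi 0), 0 < β ∧ β < 1 :=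
    Ioo_mem_nhdsGT one_pos
  have key := tendsto_setIntegral_peak_smul_of_integrableOn_of_tendsto
    (μ := (volume : Measure ℝ)) (s := Icc (-R) R) (t := Icc (-R) R) (x₀ := (0 : ℝ)) (a := g 0)
    (g := g) (l := nhdsWithin (0 : ℝ) (Ioi 0)) (φ := fun β t => β / 2 * wt β t)
    measurableSet_Icc measurableSet_Icc subset_rfl self_mem_nhdsWithin (by simp) ?_ ?_ ?_ ?_
    (hg.continuousOn.integrableOn_Icc) (hg.continuousAt.tendsto.mono_left nhdsWithin_le_nhds)
  · simpa only [smul_eq_mul] using key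
  · filter_upwards [hmem] with β hβ t _
    exact mul_nonneg (by linarith) (wt_nonneg _ _)
  · -- away from `0` the base `cosh t - 1` is bounded below, hence `β (cosh t - 1)^(β-1) → 0`
    intro u hu h0
    obtain ⟨ε, hε, hball⟩ := Metric.isOpen_iff.1 hu 0 h0
    have ha : 0 < Real.cosh ε - 1 := by
      have := Real.one_lt_cosh.2 hε.ne'
      linarith
    set a := Real.cosh ε - 1 with ha_def
    have hlim : Filter.Tendsto (fun β : ℝ => β / 2 * (a ^ (β - 1) * Real.sinh R))
        (nhdsWithin 0 (Ioi 0)) (nhds 0) := by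
      have hc : ContinuousAt (fun β : ℝ => β / 2 * (a ^ (β - 1) * Real.sinh R)) 0 := by
        have : ContinuousAt (fun β : ℝ => a ^ (β - 1)) 0 :=
          ContinuousAt.rpow continuousAt_const (by fun_prop) (Or.inl ha.ne')
        exact (continuousAt_id.div_const 2).mul (this.mul continuousAt_const)
      simpa using hc.tendsto.mono_left nhdsWithin_le_nhds
    rw [Metric.tendstoUniformlyOn_iff]
    intro δ hδ
    filter_upwards [hmem, hlim.eventually (gt_mem_nhds hδ)] with β hβ hlt t ht
    rw [Pi.zero_apply, dist_zero_left, Real.norm_of_nonneg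
      (mul_nonneg (by linarith) (wt_nonneg _ _))]
    refine lt_of_le_of_lt ?_ hlt
    have htε : ε ≤ |t| := by
      by_contra hcon
      exact ht.2 (hball (by simpa [Real.dist_eq] using hcon))
    have h1 : a ≤ Real.cosh t - 1 := by
      have : Real.cosh ε ≤ Real.cosh t := by
        rw [Real.cosh_le_cosh, abs_of_pos hε]
        exact htε
      linarith
    have h2 : (Real.cosh t - 1) ^ (β - 1) ≤ a ^ (β - 1) :=
      Real.rpow_le_rpow_of_nonpos ha h1 (by linarith)
    have h3 : |Real.sinh t| ≤ Real.sinh R := by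
      rw [Real.abs_sinh]
      exact Real.sinh_le_sinh.2 (abs_le.2 ht.1)
    have h4 : 0 ≤ β / 2 := by linarith
    unfold wt
    gcongr
  · have h : (fun β : ℝ => ∫ t in Icc (-R) R, β / 2 * wt β t)
        =ᶠ[nhdsWithin 0 (Ioi 0)] fun β => (Real.cosh R - 1) ^ β := by
      filter_upwards [hmem] with β hβ
      rw [integral_const_mul, (wt_full hβ.1 hR).2]
      have := hβ.1.ne'
      field_simp
    exact (tendsto_mass hR).congr' h.symm
  · filter_upwards with β
    exact ((measurable_wt β).const_mul _).aestronglyMeasurable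

/-- The double integral, with the singular factor `β/2` in place of `1 / (2 Γ(β))`, converges to
`∫ F(k, 0)`: dominated convergence in `k` over `SO(n)`. -/
lemma tendsto_double (n : ℕ) (b : ℝ)
    (μK : Measure (Fin n → Fin n → ℝ)) (hμK : IsHaarSO n μK)
    (F : (Fin n → Fin n → ℝ) × ℝ → ℝ)
    (hFc : ContinuousOn F ((SOset n) ×ˢ (Set.univ : Set ℝ)))
    {R : ℝ} (hR : 0 < R) (hFs : ∀ (k : Fin n → Fin n → ℝ) (t : ℝ), R ≤ |t| → F (k, t) = 0) :
    Filter.Tendsto (fun β : ℝ => β / 2 *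
        ∫ k, (∫ t : ℝ, F (k, t) * (Real.exp (t * b) * (Real.cosh t - 1) ^ (β - 1) *
          |Real.sinh t|)) ∂μK)
      (nhdsWithin 0 (Ioi 0)) (nhds (∫ k, F (k, 0) ∂μK)) := by
  have := hμK.prob
  have hSO : ∀ᵐ k ∂μK, k ∈ SOset n := hμK.supported
  have hres : μK.restrict (SOset n) = μK := Measure.restrict_eq_self_of_ae_mem hSO
  have hmem : ∀ᶠ β : ℝ in nhdsWithin 0 (Ioi 0), 0 < β ∧ β < 1 :=
    Ioo_mem_nhdsGT one_pos
  have hFm : AEStronglyMeasurable F (μK.prod volume) := by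
    have h := hFc.aestronglyMeasurable (μ := μK.prod volume)
      ((isClosed_SOset n).measurableSet.prod MeasurableSet.univ)
    rwa [← Measure.prod_restrict, hres, Measure.restrict_univ] at h
  obtain ⟨M, hM⟩ : ∃ M, ∀ k ∈ SOset n, ∀ t ∈ Icc (-R) R, ‖F (k, t) * Real.exp (t * b)‖ ≤ M := by
    have hc : ContinuousOn (fun p : (Fin n → Fin n → ℝ) × ℝ => F p * Real.exp (p.2 * b))
        (SOset n ×ˢ Icc (-R) R) :=
      (hFc.mono (prod_mono_right (subset_univ _))).mul (by fun_prop)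
    obtain ⟨M, hM⟩ := ((isCompact_SOset n).prod isCompact_Icc).exists_bound_of_continuousOn hc
    exact ⟨M, fun k hk t ht => hM (k, t) ⟨hk, ht⟩⟩
  -- the inner integral lives on `[-R, R]`
  have hinner : ∀ β k, β / 2 * (∫ t : ℝ, F (k, t) * (Real.exp (t * b) *
      (Real.cosh t - 1) ^ (β - 1) * |Real.sinh t|)) =
      ∫ t in Icc (-R) R, (β / 2 * wt β t) * (F (k, t) * Real.exp (t * b)) := by
    intro β k
    rw [← integral_const_mul, ← setIntegral_eq_integral_of_forall_compl_eq_zero (s := Icc (-R) R)]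
    · congr 1
      ext t
      unfold wt
      ring
    · intro t ht
      rw [hFs k t, zero_mul, mul_zero]
      by_contra hcon
      exact ht (abs_le.1 (not_le.1 hcon).le)
  have houter : ∀ β : ℝ, β / 2 *
      ∫ k, (∫ t : ℝ, F (k, t) * (Real.exp (t * b) * (Real.cosh t - 1) ^ (β - 1) *
        |Real.sinh t|)) ∂μK =
      ∫ k, (∫ t in Icc (-R) R, (β / 2 * wt β t) * (F (k, t) * Real.exp (t * b))) ∂μK := by
    intro β
    rw [← integral_const_mul]
    exact integral_congr_ae (.of_forall fun k => hinner β k)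
  simp_rw [houter]
  refine tendsto_integral_filter_of_dominated_convergence (fun _ => 2 * M) ?_ ?_
    (integrable_const _) ?_
  · filter_upwards with β
    have hm : AEStronglyMeasurable
        (fun p : (Fin n → Fin n → ℝ) × ℝ => (β / 2 * wt β p.2) * (F p * Real.exp (p.2 * b)))
        (μK.prod (volume.restrict (Icc (-R) R))) := by
      have h1 : AEStronglyMeasurable F (μK.prod (volume.restrict (Icc (-R) R))) :=
        hFm.mono_ac (Measure.AbsolutelyContinuous.rfl.prod Measure.absolutelyContinuous_restrict)
      have h2 : Measurable fun p : (Fin n → Fin n → ℝ) × ℝ => β / 2 * wt β p.2 :=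
        ((measurable_wt β).comp measurable_snd).const_mul _
      have h3 : Measurable fun p : (Fin n → Fin n → ℝ) × ℝ => Real.exp (p.2 * b) := by fun_prop
      exact h2.aestronglyMeasurable.mul (h1.mul h3.aestronglyMeasurable)
    exact hm.integral_prod_right'
  · filter_upwards [hmem, (tendsto_mass hR).eventually (gt_mem_nhds one_lt_two)] with β hβ hlt
    filter_upwards [hSO] with k hk
    have hM0 : 0 ≤ M :=
      (norm_nonneg _).trans (hM k hk 0 ⟨by linarith, hR.le⟩)
    have hβ2 : 0 ≤ β / 2 := by linarith
    calc ‖∫ t in Icc (-R) R, (β / 2 * wt β t) * (F (k, t) * Real.exp (t * b))‖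
        ≤ ∫ t in Icc (-R) R, (β / 2 * wt β t) * M := by
          refine norm_integral_le_of_norm_le (((wt_full hβ.1 hR).1.const_mul _).mul_const _) ?_
          filter_upwards [ae_restrict_mem measurableSet_Icc] with t ht
          have h0 : 0 ≤ β / 2 * wt β t := mul_nonneg hβ2 (wt_nonneg β t)
          rw [norm_mul, Real.norm_of_nonneg h0]
          exact mul_le_mul_of_nonneg_left (hM k hk t ht) h0
      _ = (Real.cosh R - 1) ^ β * M := by
          rw [integral_mul_const, integral_const_mul, (wt_full hβ.1 hR).2]
          have := hβ.1.ne'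
          field_simp
      _ ≤ 2 * M := mul_le_mul_of_nonneg_right hlt.le hM0
  · filter_upwards [hSO] with k hk
    have hcont : Continuous fun t : ℝ => F (k, t) * Real.exp (t * b) := by
      have h1 : Continuous fun t : ℝ => F (k, t) :=
        hFc.comp_continuous (by fun_prop) fun t => ⟨hk, mem_univ t⟩
      exact h1.mul (by fun_prop)
    simpa using tendsto_inner hR hcont

/-- as `α → 0⁺`, the dual-type operators converge to `c⁻¹` times the
mean value operator. -/
theorem dual_operator_limit
    (n d : ℕ) (hn : 2 ≤ n) (hd1 : 1 ≤ d) (hdn : d ≤ n - 1)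
    (μK : Measure (Fin n → Fin n → ℝ)) (hμK : IsHaarSO n μK)
    (F : (Fin n → Fin n → ℝ) × ℝ → ℝ)
    (hFc : ContinuousOn F ((SOset n) ×ˢ (Set.univ : Set ℝ)))
    (hFs : ∃ R : ℝ, 0 < R ∧ ∀ (k : Fin n → Fin n → ℝ) (t : ℝ), R ≤ |t| → F (k, t) = 0) :
    Filter.Tendsto (fun α : ℝ =>
        Real.Gamma (((n : ℝ) - α - d) / 2) /
            ((2 : ℝ) ^ (α / 2 + (d : ℝ) + 1) * Real.pi ^ ((d : ℝ) / 2) * Real.Gamma (α / 2) *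
              Real.Gamma ((n : ℝ) / 2)) *
          ∫ k, (∫ t : ℝ, F (k, t) *
            (Real.exp (t * d / 2) * (Real.cosh t - 1) ^ (α / 2 - 1) * |Real.sinh t|)) ∂μK)
      (nhdsWithin 0 (Set.Ioo (0 : ℝ) ((n : ℝ) - d)))
      (nhds (((2 : ℝ) ^ (d : ℝ) * Real.pi ^ ((d : ℝ) / 2) * Real.Gamma ((n : ℝ) / 2) /
          Real.Gamma (((n : ℝ) - d) / 2))⁻¹ * ∫ k, F (k, 0) ∂μK)) := by
  obtain ⟨R, hR, hFs⟩ := hFs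
  have hdn' : (d : ℝ) < n := by exact_mod_cast (by omega : d < n)
  have hle : nhdsWithin (0 : ℝ) (Ioo 0 ((n : ℝ) - d)) ≤ nhdsWithin 0 (Ioi 0) :=
    nhdsWithin_mono _ Ioo_subset_Ioi_self
  -- `β = α / 2` tends to `0` from the right
  have hhalf : Filter.Tendsto (fun α : ℝ => α / 2) (nhdsWithin 0 (Ioo 0 ((n : ℝ) - d)))
      (nhdsWithin 0 (Ioi 0)) := by
    refine tendsto_nhdsWithin_iff.2 ⟨?_, ?_⟩
    · have : Continuous fun α : ℝ => α / 2 := by fun_prop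
      simpa using (this.tendsto 0).mono_left nhdsWithin_le_nhds
    · filter_upwards [self_mem_nhdsWithin] with α hα
      exact half_pos hα.1
  have hI := (tendsto_double n ((d : ℝ) / 2) μK hμK F hFc hR hFs).comp hhalf
  have hG1 : ContinuousAt (fun α : ℝ => Real.Gamma (((n : ℝ) - α - d) / 2)) 0 := by
    refine ContinuousAt.comp (g := Real.Gamma) ?_ (by fun_prop)
    refine continuousAt_Gamma_of_pos ?_
    linarith
  have hG2 : ContinuousAt (fun α : ℝ => Real.Gamma (α / 2 + 1)) 0 := by
    refine ContinuousAt.comp (g := Real.Gamma) ?_ (by fun_prop)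
    refine continuousAt_Gamma_of_pos ?_
    norm_num
  have hn2 : 0 < Real.Gamma ((n : ℝ) / 2) := Real.Gamma_pos_of_pos (by positivity)
  have hnd2 : 0 < Real.Gamma (((n : ℝ) - d) / 2) := Real.Gamma_pos_of_pos (by linarith)
  -- the regular part of `2 c_α / (α/2)`, using `Γ(α/2 + 1) = (α/2) Γ(α/2)`
  have hC : ContinuousAt (fun α : ℝ => 2 * Real.Gamma (((n : ℝ) - α - d) / 2) /
      ((2 : ℝ) ^ (α / 2 + (d : ℝ) + 1) * Real.pi ^ ((d : ℝ) / 2) * Real.Gamma (α / 2 + 1) *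
        Real.Gamma ((n : ℝ) / 2))) 0 := by
    have h2 : ContinuousAt (fun α : ℝ => (2 : ℝ) ^ (α / 2 + (d : ℝ) + 1)) 0 :=
      ContinuousAt.rpow continuousAt_const (by fun_prop) (Or.inl two_ne_zero)
    refine (continuousAt_const.mul hG1).div
      (((h2.mul continuousAt_const).mul hG2).mul continuousAt_const) ?_
    simp only [zero_div, zero_add, Real.Gamma_one]
    positivity
  have hC' := hC.tendsto.mono_left (nhdsWithin_le_nhds (s := Ioo 0 ((n : ℝ) - d)))
  have hprod := hC'.mul hI
  have hval : 2 * Real.Gamma (((n : ℝ) - 0 - d) / 2) /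
      ((2 : ℝ) ^ ((0 : ℝ) / 2 + (d : ℝ) + 1) * Real.pi ^ ((d : ℝ) / 2) *
        Real.Gamma ((0 : ℝ) / 2 + 1) * Real.Gamma ((n : ℝ) / 2)) =
      ((2 : ℝ) ^ (d : ℝ) * Real.pi ^ ((d : ℝ) / 2) * Real.Gamma ((n : ℝ) / 2) /
          Real.Gamma (((n : ℝ) - d) / 2))⁻¹ := by
    rw [zero_div, zero_add, zero_add, Real.Gamma_one, sub_zero,
      Real.rpow_add_one two_ne_zero, inv_div]
    field_simp
  rw [hval] at hprod
  refine hprod.congr' ?_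
  filter_upwards [self_mem_nhdsWithin] with α hα
  have hα2 : 0 < α / 2 := half_pos hα.1
  have hGα := Real.Gamma_pos_of_pos hα2
  simp only [Function.comp_apply]
  simp_rw [mul_div_assoc _ (d : ℝ) (2 : ℝ)]
  rw [Real.Gamma_add_one hα2.ne', ← mul_assoc]
  congr 1
  have := hα.1.ne'
  field_simp
end
end

section
/- Let M = { diag(m, I_2) : m ∈ SO(n-1) }, N = { n_v : v ∈ ℝ^{n-1} }, M_d = { diag(α, β, I_2) : α ∈ O(n-1-d), β ∈ O(d), det(α)·det(β) = 1 }, and N_d = { n_v : v_1 = ⋯ = v_{n-1-d} = 0 }, all viewed as sets of (n+1)×(n+1) real matrices, and let V = span(e_1, …, e_{n-1-d}) ⊂ ℝ^{n+1}. Then the stabilizer of V in the product set MN equals M_d N_d; that is, { γ n_v : γ ∈ M, v ∈ ℝ^{n-1}, and (γ n_v) V ⊆ V } = { m n_v : m ∈ M_d, n_v ∈ N_d }. -/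
/-!
The first `n - 1` columns of `diag(γ, I₂) n_v` are those of `γ`, with the entries of `v` repeated in
the last two rows (`embM_mul_nMat_apply`). Put `k = n - 1 - d`. Invariance of `V = span(e_1, …, e_k)`
means that the entries in rows `≥ k` of the first `k` columns vanish (`stab_iff`): so `v` vanishes on
its first `k` coordinates, and `γ` is block upper triangular, `γ = [[A, C], [0, D]]`.
Comparing the blocks of `γ γᵀ = 1` gives `D Dᵀ = 1` and `C Dᵀ = 0`, hence `C = 0` and `A Aᵀ = 1`
(`blocks_of_orthogonal`): an orthogonal block triangular matrix is block diagonal. Conversely, a block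
diagonal `γ` and such a `v` visibly preserve `V`.
-/

open MeasureTheory Real Set
open scoped ENNReal

noncomputable section

/-- The splitting of `n - 1` indices into the first `n - 1 - d` and the last `d`. -/
def splitEquiv (n d : ℕ) (hdn : d ≤ n - 1) : Fin (n - 1 - d) ⊕ Fin d ≃ Fin (n - 1) :=
  finSumFinEquiv.trans (finCongr (Nat.sub_add_cancel hdn))

theorem splitEquiv_inl (n d : ℕ) (hdn : d ≤ n - 1) (i : Fin (n - 1 - d)) :
    (splitEquiv n d hdn (Sum.inl i) : ℕ) = i := by
  simp [splitEquiv]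

theorem splitEquiv_inr (n d : ℕ) (hdn : d ≤ n - 1) (i : Fin d) :
    (splitEquiv n d hdn (Sum.inr i) : ℕ) = n - 1 - d + i := by
  simp [splitEquiv]

theorem splitEquiv_symm_of_lt (n d : ℕ) (hdn : d ≤ n - 1) (i : Fin (n - 1))
    (h : (i : ℕ) < n - 1 - d) : (splitEquiv n d hdn).symm i = Sum.inl ⟨i, h⟩ := by
  rw [Equiv.symm_apply_eq]
  ext
  rw [splitEquiv_inl]

theorem splitEquiv_symm_of_not_lt (n d : ℕ) (hdn : d ≤ n - 1) (i : Fin (n - 1))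
    (h : ¬ (i : ℕ) < n - 1 - d) (h2 : (i : ℕ) - (n - 1 - d) < d) :
    (splitEquiv n d hdn).symm i = Sum.inr ⟨(i : ℕ) - (n - 1 - d), h2⟩ := by
  rw [Equiv.symm_apply_eq]
  ext
  rw [splitEquiv_inr]
  dsimp only
  omega

theorem embMd_eq_embM (n d : ℕ) (hdn : d ≤ n - 1) (a : Fin (n - 1 - d) → Fin (n - 1 - d) → ℝ)
    (b : Fin d → Fin d → ℝ) :
    embMd n d a b = embM n (Matrix.of.symm ((Matrix.fromBlocks (Matrix.of a) 0 0 (Matrix.of b)).submatrix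
      (splitEquiv n d hdn).symm (splitEquiv n d hdn).symm)) := by
  ext i j
  simp only [embMd, embM, Matrix.of_apply, Matrix.of_symm_apply, Matrix.submatrix_apply]
  by_cases hi : (i : ℕ) < n - 1
  · by_cases hj : (j : ℕ) < n - 1
    · by_cases hi' : (i : ℕ) < n - 1 - d
      · rw [dif_pos hi', dif_pos hi, dif_pos hj, splitEquiv_symm_of_lt n d hdn ⟨i, hi⟩ hi']
        by_cases hj' : (j : ℕ) < n - 1 - d
        · rw [dif_pos hj', splitEquiv_symm_of_lt n d hdn ⟨j, hj⟩ hj']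
          simp
        · rw [dif_neg hj', splitEquiv_symm_of_not_lt n d hdn ⟨j, hj⟩ hj' (by dsimp only; omega)]
          simp
      · rw [dif_neg hi', if_pos hi, dif_pos hi, dif_pos hj,
          splitEquiv_symm_of_not_lt n d hdn ⟨i, hi⟩ hi' (by dsimp only; omega)]
        by_cases hj' : (j : ℕ) < n - 1 - d
        · rw [if_pos hj', splitEquiv_symm_of_lt n d hdn ⟨j, hj⟩ hj']
          simp
        · rw [if_neg hj', if_pos hj, dif_pos (by omega), dif_pos (by omega),
            splitEquiv_symm_of_not_lt n d hdn ⟨j, hj⟩ hj' (by dsimp only; omega)]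
          simp
    · have hj' : ¬ (j : ℕ) < n - 1 - d := by omega
      simp [hi, hj, hj']
  · have hi' : ¬ (i : ℕ) < n - 1 - d := by omega
    simp [hi, hi']

theorem embM_mul_nMat_apply (n : ℕ) (γ : Fin (n - 1) → Fin (n - 1) → ℝ) (v : Fin (n - 1) → ℝ)
    (i j : Fin (n + 1)) (hj : (j : ℕ) < n - 1) :
    (embM n γ * nMat n v) i j =
      if hi : (i : ℕ) < n - 1 then γ ⟨i, hi⟩ ⟨j, hj⟩ else v ⟨j, hj⟩ := by
  rw [Matrix.mul_apply]
  by_cases hi : (i : ℕ) < n - 1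
  · rw [Finset.sum_eq_single j]
    · simp [embM, nMat, hi, hj]
    · intro k _ hk
      have hk' : (k : ℕ) ≠ j := fun h => hk (Fin.ext h)
      by_cases hkn : (k : ℕ) < n - 1
      · simp [nMat, hkn, hj, hk']
      · simp [embM, hi, hkn]
    · simp
  · rw [Finset.sum_eq_single i]
    · simp [embM, nMat, hi, hj]
    · intro k _ hk
      have hk' : (i : ℕ) ≠ k := fun h => hk (Fin.ext h.symm)
      simp [embM, hi, hk']
    · simp

/-- `γ n_v` preserves the span of the first `k = n - 1 - d` basis vectors iff `γ` is block upper
triangular and the first `k` coordinates of `v` vanish. -/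
theorem stab_iff (n d : ℕ) (hn : 2 ≤ n) (γ : Fin (n - 1) → Fin (n - 1) → ℝ) (v : Fin (n - 1) → ℝ) :
    (∀ x ∈ {x : Fin (n + 1) → ℝ | ∀ i : Fin (n + 1), ¬ ((i : ℕ) < n - 1 - d) → x i = 0},
      (embM n γ * nMat n v).mulVec x ∈
        {x : Fin (n + 1) → ℝ | ∀ i : Fin (n + 1), ¬ ((i : ℕ) < n - 1 - d) → x i = 0}) ↔
    (∀ i j : Fin (n - 1), ¬ (i : ℕ) < n - 1 - d → (j : ℕ) < n - 1 - d → γ i j = 0) ∧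
      ∀ j : Fin (n - 1), (j : ℕ) < n - 1 - d → v j = 0 := by
  simp only [Set.mem_ofPred_eq]
  constructor
  · intro h
    have key : ∀ i j : Fin (n + 1), ¬ (i : ℕ) < n - 1 - d → (j : ℕ) < n - 1 - d →
        (embM n γ * nMat n v) i j = 0 := by
      intro i j hi hj
      have := h (Pi.single j 1) (fun l hl => by
        rw [Pi.single_eq_of_ne]
        rintro rfl
        exact hl hj) i hi
      simpa using this
    refine ⟨fun i j hi hj => ?_, fun j hj => ?_⟩
    · have := key ⟨i, by omega⟩ ⟨j, by omega⟩ hi hj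
      rw [embM_mul_nMat_apply n γ v _ _ (by simp)] at this
      simpa using this
    · have := key ⟨n, by omega⟩ ⟨j, by omega⟩ (by dsimp only; omega) hj
      rw [embM_mul_nMat_apply n γ v _ _ (by simp), dif_neg (by dsimp only; omega)] at this
      simpa using this
  · rintro ⟨h1, h2⟩ x hx i hi
    rw [Matrix.mulVec, dotProduct]
    refine Finset.sum_eq_zero fun j _ => ?_
    by_cases hj : (j : ℕ) < n - 1 - d
    · rw [embM_mul_nMat_apply n γ v i j (by omega)]
      split_ifs with hin
      · rw [h1 _ _ hi hj, zero_mul]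
      · rw [h2 _ hj, zero_mul]
    · rw [hx j hj, mul_zero]

/-- A block upper triangular matrix with orthonormal rows is block diagonal. -/
theorem blocks_of_orthogonal {p q : ℕ} (A : Matrix (Fin p) (Fin p) ℝ) (C : Matrix (Fin p) (Fin q) ℝ)
    (D : Matrix (Fin q) (Fin q) ℝ)
    (h : Matrix.fromBlocks A C 0 D * (Matrix.fromBlocks A C 0 D).transpose = 1) :
    C = 0 ∧ A * A.transpose = 1 ∧ D * D.transpose = 1 := by
  rw [Matrix.fromBlocks_transpose, Matrix.fromBlocks_multiply, ← Matrix.fromBlocks_one,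
    Matrix.fromBlocks_inj] at h
  obtain ⟨h1, h2, -, h4⟩ := h
  have hD : D * D.transpose = 1 := by simpa using h4
  have hD' : D.transpose * D = 1 := mul_eq_one_comm.mp hD
  have hC : C = 0 := by
    have h2' : C * D.transpose = 0 := by simpa using h2
    calc C = C * D.transpose * D := by rw [Matrix.mul_assoc, hD', Matrix.mul_one]
      _ = 0 := by rw [h2', Matrix.zero_mul]
  refine ⟨hC, ?_, hD⟩
  simpa [hC] using h1

/-- the stabilizer of `V = span(e₁, …, e_{n-1-d})` in `MN` is `M_d N_d`. -/
theorem stabilizer_MN_eq_MdNd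
    (n d : ℕ) (hn : 2 ≤ n) (hd1 : 1 ≤ d) (hdn : d ≤ n - 1)
    (V : Set (Fin (n + 1) → ℝ))
    (hV : V = {x | ∀ i : Fin (n + 1), ¬ ((i : ℕ) < n - 1 - d) → x i = 0}) :
    {g : Matrix (Fin (n + 1)) (Fin (n + 1)) ℝ |
        (∃ γ : Fin (n - 1) → Fin (n - 1) → ℝ,
          (Matrix.of γ * Matrix.transpose (Matrix.of γ) = 1 ∧ (Matrix.of γ).det = 1) ∧
          ∃ v : Fin (n - 1) → ℝ, g = embM n γ * nMat n v) ∧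
        ∀ x ∈ V, g.mulVec x ∈ V}
      = {g : Matrix (Fin (n + 1)) (Fin (n + 1)) ℝ |
          ∃ (a : Fin (n - 1 - d) → Fin (n - 1 - d) → ℝ) (b : Fin d → Fin d → ℝ),
            Matrix.of a * Matrix.transpose (Matrix.of a) = 1 ∧
            Matrix.of b * Matrix.transpose (Matrix.of b) = 1 ∧
            (Matrix.of a).det * (Matrix.of b).det = 1 ∧
            ∃ v : Fin (n - 1) → ℝ, (∀ i : Fin (n - 1), (i : ℕ) < n - 1 - d → v i = 0) ∧
              g = embMd n d a b * nMat n v} := by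
  subst hV
  set e := splitEquiv n d hdn with he
  ext g
  constructor
  · rintro ⟨⟨γ, ⟨hγ, hdet⟩, v, rfl⟩, hstab⟩
    obtain ⟨hlow, hv⟩ := (stab_iff n d hn γ v).mp hstab
    set B := (Matrix.of γ).submatrix e e with hB
    have hB21 : B.toBlocks₂₁ = 0 := by
      ext i j
      refine hlow _ _ ?_ ?_
      · rw [he, splitEquiv_inr]; omega
      · rw [he, splitEquiv_inl]; exact j.2
    have hBb : B = Matrix.fromBlocks B.toBlocks₁₁ B.toBlocks₁₂ 0 B.toBlocks₂₂ := by
      rw [← hB21, Matrix.fromBlocks_toBlocks]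
    have hBo : B * B.transpose = 1 := by
      rw [hB, Matrix.transpose_submatrix, Matrix.submatrix_mul_equiv, hγ, Matrix.submatrix_one_equiv]
    have hBdet : B.det = 1 := by rw [hB, Matrix.det_submatrix_equiv_self, hdet]
    rw [hBb] at hBo hBdet
    obtain ⟨hC, hA, hD⟩ := blocks_of_orthogonal _ _ _ hBo
    rw [Matrix.det_fromBlocks_zero₂₁] at hBdet
    refine ⟨Matrix.of.symm B.toBlocks₁₁, Matrix.of.symm B.toBlocks₂₂, hA, hD, hBdet, v, hv, ?_⟩
    rw [embMd_eq_embM n d hdn, Equiv.apply_symm_apply, Equiv.apply_symm_apply]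
    rw [hC] at hBb
    rw [← hBb, hB, Matrix.submatrix_submatrix, ← he, Equiv.self_comp_symm, Matrix.submatrix_id_id,
      Equiv.symm_apply_apply]
  · rintro ⟨a, b, ha, hb, hdet, v, hv, rfl⟩
    rw [embMd_eq_embM n d hdn]
    refine ⟨⟨_, ⟨?_, ?_⟩, v, rfl⟩, (stab_iff n d hn _ v).mpr ⟨fun i j hi hj => ?_, hv⟩⟩
    · rw [Equiv.apply_symm_apply, Matrix.transpose_submatrix, Matrix.submatrix_mul_equiv,
        Matrix.fromBlocks_transpose, Matrix.fromBlocks_multiply]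
      simp [ha, hb]
    · rw [Equiv.apply_symm_apply, Matrix.det_submatrix_equiv_self, Matrix.det_fromBlocks_zero₂₁, hdet]
    · rw [Matrix.of_symm_apply, Matrix.submatrix_apply, splitEquiv_symm_of_lt n d hdn j hj,
        splitEquiv_symm_of_not_lt n d hdn i hi (by omega)]
      simp
end
end
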